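/- Let A be a unital C*-algebra, let φ : A → ℂ be a state (a linear functional with φ(1) = 1 and φ(a* a) ≥ 0 for all a ∈ A; such a functional is automatically bounded of norm 1), let β be a *-automorphism of A satisfying φ ∘ β = φ, and let u ∈ A be a unitary. Then for all y, z ∈ A: |φ(β(z) y) − φ(u z u* y)| ≤ φ((β⁻¹(y) − u* y u)* (β⁻¹(y) − u* y u))^{1/2} · ‖z‖ + ‖φ ∘ Ad u − φ‖ · ‖y‖ · ‖z‖, where Ad u (x) := u x u* and ‖φ ∘ Ad u − φ‖ := sup{ |φ(u w u*) − φ(w)| : w ∈ A, ‖w‖ ≤ 1 }. -/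

import Mathlib

open scoped ComplexOrder in
/-- Cauchy–Schwarz combined with the bound of a state by the norm. -/
lemma state_cs_bound {A : Type*} [CStarAlgebra A]
    (φ : A →ₗ[ℂ] ℂ) (hφ1 : φ 1 = 1)
    (hφpos : ∀ a : A, ∃ r : ℝ, 0 ≤ r ∧ φ (star a * a) = (r : ℂ)) (z d : A) :
    ‖φ (z * d)‖ ≤ Real.sqrt ((φ (star d * d)).re) * ‖z‖ ∧
      Real.sqrt ((φ (star d * d)).re) ≤ ‖d‖ := by
  letI : PartialOrder A := CStarAlgebra.spectralOrder A
  haveI : StarOrderedRing A := CStarAlgebra.spectralOrderedRing A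
  have hpos : ∀ a : A, 0 ≤ a → 0 ≤ φ a := by
    intro a ha
    obtain ⟨b, rfl⟩ := CStarAlgebra.nonneg_iff_eq_star_mul_self.mp ha
    obtain ⟨r, hr, h⟩ := hφpos b
    rw [h]
    exact_mod_cast hr
  let f : A →ₚ[ℂ] ℂ := PositiveLinearMap.mk₀ φ hpos
  have hf : ∀ a, f a = φ a := fun a => rfl
  have hbound : ∀ a : A, Real.sqrt ((φ (star a * a)).re) ≤ ‖a‖ := by
    intro a
    have h1 : star a * a ≤ algebraMap ℝ A ‖star a * a‖ :=
      IsSelfAdjoint.le_algebraMap_norm_self (IsSelfAdjoint.star_mul_self a)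
    have h2 := hpos _ (sub_nonneg.mpr h1)
    rw [map_sub, Algebra.algebraMap_eq_smul_one, CStarRing.norm_star_mul_self,
      ← Complex.coe_smul, map_smul, hφ1] at h2
    have h3 := (Complex.le_def.mp h2).1
    simp at h3
    apply Real.sqrt_le_iff.mpr ⟨norm_nonneg _, ?_⟩
    nlinarith
  refine ⟨?_, hbound d⟩
  have h := norm_inner_le_norm (𝕜 := ℂ) (f.toPreGNS (star z)) (f.toPreGNS d)
  rw [PositiveLinearMap.preGNS_inner_def, PositiveLinearMap.preGNS_norm_def,
    PositiveLinearMap.preGNS_norm_def] at h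
  simp only [PositiveLinearMap.ofPreGNS_toPreGNS, hf] at h
  have h4 := hbound (star z)
  rw [norm_star] at h4
  rw [star_star] at h h4
  refine h.trans ?_
  rw [mul_comm]
  gcongr

/-- Perturbation estimate -/
theorem state_automorphism_unitary_perturbation_estimate
    {A : Type*} [NormedRing A] [StarRing A] [CStarRing A]
    [NormedAlgebra ℂ A] [CompleteSpace A] [StarModule ℂ A]
    (φ : A →ₗ[ℂ] ℂ) (hφ1 : φ 1 = 1)
    (hφpos : ∀ a : A, ∃ r : ℝ, 0 ≤ r ∧ φ (star a * a) = (r : ℂ))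
    (β : A ≃⋆ₐ[ℂ] A) (hβφ : ∀ a : A, φ (β a) = φ a)
    (u : A) (hu : u ∈ unitary A) (y z : A) :
    ‖φ (β z * y) - φ (u * z * star u * y)‖ ≤
      Real.sqrt ((φ (star (β.symm y - star u * y * u) * (β.symm y - star u * y * u))).re)
          * ‖z‖
        + (⨆ w : {w : A // ‖w‖ ≤ 1}, ‖φ (u * (w : A) * star u) - φ (w : A)‖)
          * ‖y‖ * ‖z‖ := by
  letI : CStarAlgebra A := {}
  have key := state_cs_bound φ hφ1 hφpos
  have hnorm : ∀ w, ‖φ w‖ ≤ ‖w‖ := by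
    intro w
    have h1 := (key w 1).1
    simpa [hφ1] using h1
  have hu1 : star u * u = 1 := (Unitary.mem_iff.mp hu).1
  have hu2 : u * star u = 1 := (Unitary.mem_iff.mp hu).2
  have hAd : ∀ w, ‖u * w * star u‖ = ‖w‖ := by
    intro w
    rw [CStarRing.norm_mul_mem_unitary _ (Unitary.star_mem hu), CStarRing.norm_mem_unitary_mul _ hu]
  have hAd' : ‖star u * y * u‖ = ‖y‖ := by
    rw [CStarRing.norm_mul_mem_unitary _ hu, CStarRing.norm_mem_unitary_mul _ (Unitary.star_mem hu)]
  set S := ⨆ w : {w : A // ‖w‖ ≤ 1}, ‖φ (u * (w : A) * star u) - φ (w : A)‖ with hS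
  have hbdd : BddAbove (Set.range fun w : {w : A // ‖w‖ ≤ 1} =>
      ‖φ (u * (w : A) * star u) - φ (w : A)‖) := by
    refine ⟨2, ?_⟩
    rintro _ ⟨⟨w, hw⟩, rfl⟩
    have h1 := norm_sub_le (φ (u * w * star u)) (φ w)
    have h2 := hnorm (u * w * star u)
    rw [hAd] at h2
    have h3 := hnorm w
    show ‖φ (u * w * star u) - φ w‖ ≤ 2
    linarith
  have hS0 : 0 ≤ S := Real.iSup_nonneg fun _ => norm_nonneg _
  have hSw : ∀ w : A, ‖φ (u * w * star u) - φ w‖ ≤ S * ‖w‖ := by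
    intro w
    by_cases hw : ‖w‖ = 0
    · have : w = 0 := norm_eq_zero.mp hw
      simp [this]
    have hw0 : 0 < ‖w‖ := lt_of_le_of_ne (norm_nonneg _) (Ne.symm hw)
    have hv : ‖((‖w‖⁻¹ : ℝ) : ℂ) • w‖ ≤ 1 := by
      rw [norm_smul]; simp [hw]
    have h1 := le_ciSup hbdd ⟨_, hv⟩
    rw [← hS] at h1
    simp only [mul_smul_comm, smul_mul_assoc, map_smul, ← smul_sub, norm_smul] at h1
    rw [Complex.norm_real, norm_inv, norm_norm, inv_mul_le_iff₀ hw0] at h1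
    linarith
  set d := β.symm y - star u * y * u with hd
  have e1 : φ (β z * y) = φ (z * β.symm y) := by
    rw [← hβφ (z * β.symm y), map_mul β, StarAlgEquiv.apply_symm_apply]
  have e2 : u * z * star u * y = u * (z * (star u * y * u)) * star u := by
    simp only [mul_assoc, hu2, mul_one]
  have e3 : φ (β z * y) - φ (u * z * star u * y) = φ (z * d) -
      (φ (u * (z * (star u * y * u)) * star u) - φ (z * (star u * y * u))) := by
    rw [e1, e2, hd, mul_sub, map_sub]; ring
  rw [e3]
  refine (norm_sub_le _ _).trans (add_le_add (key z d).1 ((hSw _).trans ?_))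
  have h5 := norm_mul_le z (star u * y * u)
  rw [hAd'] at h5
  calc S * ‖z * (star u * y * u)‖ ≤ S * (‖z‖ * ‖y‖) := by gcongr
    _ = S * ‖y‖ * ‖z‖ := by ring
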